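/- (Proposition 2.1 of the paper, element-level form.) Let A and B be ℤ-graded differential algebras, and let f, g : A → B be ring homomorphisms that preserve the grading and commute with the differentials (d∘f = f∘d and d∘g = g∘d). Suppose s : A → B is an additive map with s(Aⁱ) ⊆ B^{i−1} which is a homotopy from f to g, i.e. f − g = s∘d + d∘s, and which is an (f,g)-derivation, i.e. s(x·y) = (−1)ⁱ f(x)·s(y) + s(x)·g(y) for all x ∈ Aⁱ, y ∈ A. Then for every twisting element a ∈ A¹ with d a = −a·a one has f(a) − g(a) = d(s(a)) + f(a)·s(a) − s(a)·g(a); equivalently, setting p = 1 − s(a), one has p·g(a) = f(a)·p + d p, so f(a) and g(a) lie on the same gauge orbit whenever p is invertible (hence D(f) = D(g) : D(A) → D(B)). -/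

import Mathlib

/-!
The derivation rule for `a * a`, with `a` of degree `1`, reads
`s (a * a) = -(f a * s a) + s a * g a`. Since `dA a = -(a * a)`, this evaluates the term `s (dA a)`
of the homotopy identity `f a - g a = s (dA a) + dB (s a)` and gives the first formula. The second
is the same formula expanded with `p = 1 - s a`, because `dB 1 = 0`.
-/

/-- **Proposition 2.1 (element-level form).**
Let `A`, `B` be ℤ-graded differential algebras and `f, g : A → B` ring homomorphisms
preserving the grading and commuting with the differentials.  Suppose `s : A → B` is an
additive map lowering degree by one which is a homotopy from `f` to `g`
(`f - g = s∘d + d∘s`) and an `(f,g)`-derivation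
(`s(x*y) = (-1)^i f(x)*s(y) + s(x)*g(y)` for `x` of degree `i`).
Then for every twisting element `a ∈ A¹` with `d a = -a*a`, one has
`f a - g a = d(s a) + f a * s a - s a * g a`; equivalently, with `p = 1 - s a`,
`p * g a = f a * p + d p` (so `f a` and `g a` are on the same gauge orbit whenever `p` is
invertible, hence `D(f) = D(g)`). -/
theorem derivation_homotopy_gauge_equivalence
    {A : Type*} [Ring A] (𝒜 : ℤ → AddSubgroup A) [GradedRing 𝒜]
    {B : Type*} [Ring B] (ℬ : ℤ → AddSubgroup B) [GradedRing ℬ]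
    (dA : A →+ A) (dB : B →+ B)
    (hdegA : ∀ (i : ℤ), ∀ x ∈ 𝒜 i, dA x ∈ 𝒜 (i + 1))
    (hdA2 : ∀ x : A, dA (dA x) = 0)
    (hleibA : ∀ (i : ℤ) (x : A), x ∈ 𝒜 i → ∀ y : A,
      dA (x * y) = dA x * y + (((-1 : ℤˣ) ^ i : ℤˣ) : ℤ) • (x * dA y))
    (hdegB : ∀ (i : ℤ), ∀ x ∈ ℬ i, dB x ∈ ℬ (i + 1))
    (hdB2 : ∀ x : B, dB (dB x) = 0)
    (hleibB : ∀ (i : ℤ) (x : B), x ∈ ℬ i → ∀ y : B,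
      dB (x * y) = dB x * y + (((-1 : ℤˣ) ^ i : ℤˣ) : ℤ) • (x * dB y))
    (f g : A →+* B)
    (hfdeg : ∀ (i : ℤ), ∀ x ∈ 𝒜 i, f x ∈ ℬ i)
    (hgdeg : ∀ (i : ℤ), ∀ x ∈ 𝒜 i, g x ∈ ℬ i)
    (hfd : ∀ x : A, f (dA x) = dB (f x))
    (hgd : ∀ x : A, g (dA x) = dB (g x))
    (s : A →+ B)
    (hsdeg : ∀ (i : ℤ), ∀ x ∈ 𝒜 i, s x ∈ ℬ (i - 1))
    (hhtpy : ∀ x : A, f x - g x = s (dA x) + dB (s x))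
    (hder : ∀ (i : ℤ) (x : A), x ∈ 𝒜 i → ∀ y : A,
      s (x * y) = (((-1 : ℤˣ) ^ i : ℤˣ) : ℤ) • (f x * s y) + s x * g y)
    (a : A) (ha : a ∈ 𝒜 1) (hMC : dA a = -(a * a)) :
    f a - g a = dB (s a) + f a * s a - s a * g a ∧
      (1 - s a) * g a = f a * (1 - s a) + dB (1 - s a) := by
  -- Leibniz for `1 * 1` gives `dB 1 = dB 1 + dB 1`.
  have h1 : dB 1 = 0 := by
    have h := hleibB 0 1 SetLike.GradedOne.one_mem 1
    simpa using h
  -- The derivation rule in degree `1`, applied to `dA a = -(a * a)`.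
  have h2 : s (dA a) = f a * s a - s a * g a := by
    rw [hMC, map_neg, hder 1 a ha a]
    simp
    abel
  have h3 : f a - g a = dB (s a) + f a * s a - s a * g a := by
    rw [hhtpy a, h2]
    abel
  refine ⟨h3, ?_⟩
  rw [map_sub, h1, sub_mul, mul_sub, one_mul, mul_one]
  -- The two sides differ by a rearrangement of `h3`.
  linear_combination (norm := abel) -h3
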